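/- Let C_𝔣 > 0 satisfy 1/C_𝔣 = ∫_ℝ (1 − cos(2πz))/|z|^{3/2} dz, and for χ : ℝ² → ℝ define (√𝔇_{y₁}χ)(y₁,y₂) = C_𝔣·∫_ℝ (χ(y₁,y₂) − χ(y₁−z,y₂))/|z|^{3/2} dz, define √𝔇_{y₂} analogously, and √𝔇^{⊗2} = √𝔇_{y₁}√𝔇_{y₂}. Suppose φ : ℝ² → ℝ is continuous and there exist C₀, λ > 0 such that: |φ(y₁,y₂)| ≤ C₀·e^{−λ(|y₁|+|y₂|)} for all (y₁,y₂); all the singular integrals defining √𝔇_{y₁}φ, √𝔇_{y₂}φ, √𝔇^{⊗2}φ, and √𝔇^{⊗2}((y₁+y₂)·φ) converge absolutely; and |(√𝔇_{y₁}φ)(y₁,y₂)| ≤ C₀·⟨y₁⟩^{−3/2}·e^{−λ|y₂|}, |(√𝔇_{y₂}φ)(y₁,y₂)| ≤ C₀·⟨y₂⟩^{−3/2}·e^{−λ|y₁|} for all (y₁,y₂), and |(√𝔇^{⊗2}φ)(y,y)| ≤ C₀·⟨y⟩^{−3} for all y. Then there exists C > 0, depending only on C₀ and λ, such that |(√𝔇^{⊗2}((y₁+y₂)·φ))(y,y)|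 ≤ C·⟨y⟩^{−2} for all y ∈ ℝ. -/

import Mathlib

open MeasureTheory

/-- The `1/2`-fractional derivative in the first variable, in singular-integral form. -/
noncomputable def sqrtD1 (Cf : ℝ) (χ : ℝ → ℝ → ℝ) (x₁ x₂ : ℝ) : ℝ :=
  Cf * ∫ z : ℝ, (χ x₁ x₂ - χ (x₁ - z) x₂) / |z| ^ ((3:ℝ)/2)

/-- The `1/2`-fractional derivative in the second variable, in singular-integral form. -/
noncomputable def sqrtD2 (Cf : ℝ) (χ : ℝ → ℝ → ℝ) (x₁ x₂ : ℝ) : ℝ :=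
  Cf * ∫ z : ℝ, (χ x₁ x₂ - χ x₁ (x₂ - z)) / |z| ^ ((3:ℝ)/2)

/-- The cross fractional derivative `√𝔇^{⊗2} = √𝔇_{y₁}√𝔇_{y₂}`. -/
noncomputable def sqrtDD (Cf : ℝ) (χ : ℝ → ℝ → ℝ) : ℝ → ℝ → ℝ :=
  sqrtD1 Cf (sqrtD2 Cf χ)

theorem integrable_comp_abs {g : ℝ → ℝ} (hg : IntegrableOn g (Set.Ioi 0)) :
    Integrable (fun x : ℝ => g |x|) := by
  have hpos : IntegrableOn (fun x : ℝ => g |x|) (Set.Ioi 0) :=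
    hg.congr_fun (fun x hx => by simp [abs_of_pos (Set.mem_Ioi.mp hx)]) measurableSet_Ioi
  have hneg : IntegrableOn (fun x : ℝ => g |x|) (Set.Iic 0) := by
    rw [← Measure.map_neg_eq_self (volume : Measure ℝ)]
    let m : MeasurableEmbedding fun x : ℝ => -x := (Homeomorph.neg ℝ).measurableEmbedding
    rw [m.integrableOn_map_iff]
    simp_rw [Function.comp_def, abs_neg, Set.neg_preimage, Set.neg_Iic, neg_zero]
    exact Iff.mpr integrableOn_Ici_iff_integrableOn_Ioi hpos
  rw [← integrableOn_univ, ← Set.Iic_union_Ioi (a := (0 : ℝ))]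
  exact hneg.union hpos

theorem integrable_exp_neg_mul_abs {c : ℝ} (hc : 0 < c) :
    Integrable (fun t : ℝ => Real.exp (-c * |t|)) :=
  integrable_comp_abs (g := fun t => Real.exp (-c * t)) (exp_neg_integrableOn_Ioi 0 hc)

/-- The weight `min(|z|, 1) / |z|^{3/2}` controlling difference quotients of bounded Lipschitz
functions. -/
noncomputable def minWeight (z : ℝ) : ℝ := min |z| 1 / |z| ^ ((3 : ℝ) / 2)

theorem minWeight_nonneg (z : ℝ) : 0 ≤ minWeight z := by
  unfold minWeight; positivity

theorem abs_rpow_three_halves (z : ℝ) : |z| ^ ((3 : ℝ) / 2) = |z| * √|z| := by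
  rcases eq_or_ne z 0 with rfl | hz
  · norm_num
  · rw [Real.sqrt_eq_rpow, ← Real.rpow_one_add' (abs_nonneg z) (by norm_num)]
    norm_num

theorem integrable_minWeight : Integrable minWeight := by
  refine integrable_comp_abs (g := fun t => min t 1 / t ^ ((3 : ℝ) / 2)) ?_
  rw [← Set.Ioc_union_Ioi_eq_Ioi (zero_le_one' ℝ)]
  refine IntegrableOn.union ?_ ?_
  · have h : IntegrableOn (fun t : ℝ => t ^ (-(1 : ℝ) / 2)) (Set.Ioc 0 1) :=
      (intervalIntegrable_iff_integrableOn_Ioc_of_le zero_le_one).mp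
        (intervalIntegral.intervalIntegrable_rpow' (by norm_num))
    refine h.congr_fun (fun t ht => ?_) measurableSet_Ioc
    simp only
    rw [min_eq_left ht.2, eq_div_iff (by have := ht.1; positivity), ← Real.rpow_add ht.1]
    norm_num
  · have h : IntegrableOn (fun t : ℝ => t ^ (-(3 : ℝ) / 2)) (Set.Ioi 1) :=
      integrableOn_Ioi_rpow_of_lt (by norm_num) one_pos
    refine h.congr_fun (fun t ht => ?_) measurableSet_Ioi
    have ht' : (0 : ℝ) < t := one_pos.trans ht
    simp only
    rw [min_eq_right (le_of_lt ht), one_div, ← Real.rpow_neg ht'.le]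
    norm_num

theorem sqrt_mul_abs_div_le (z : ℝ) :
    √(1 + |z|) * (|z| / |z| ^ ((3 : ℝ) / 2)) ≤ 2 * (1 + minWeight z) := by
  rcases eq_or_ne z 0 with rfl | hz
  · simp [minWeight]
  have hz' : 0 < |z| := abs_pos.mpr hz
  have hs : 0 < √|z| := Real.sqrt_pos.mpr hz'
  rcases le_total |z| 1 with h | h
  · have h1 : √(1 + |z|) ≤ 2 := Real.sqrt_le_iff.mpr ⟨by norm_num, by linarith⟩
    have h2 : minWeight z = |z| / |z| ^ ((3 : ℝ) / 2) := by rw [minWeight, min_eq_left h]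
    rw [← h2]
    nlinarith [minWeight_nonneg z]
  · have h1 : √(1 + |z|) ≤ 2 * √|z| := by
      refine Real.sqrt_le_iff.mpr ⟨by positivity, ?_⟩
      rw [mul_pow, Real.sq_sqrt hz'.le]; linarith
    have h2 : |z| / |z| ^ ((3 : ℝ) / 2) = 1 / √|z| := by
      rw [abs_rpow_three_halves]; field_simp
    rw [h2, mul_one_div, div_le_iff₀ hs]
    nlinarith [minWeight_nonneg z, mul_nonneg hs.le (minWeight_nonneg z)]

theorem one_add_sq_rpow_le_sqrt (y : ℝ) : (1 + y ^ 2) ^ ((1 : ℝ) / 4) ≤ √(1 + |y|) := by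
  have h : (1 + y ^ 2) ≤ (1 + |y|) ^ 2 := by nlinarith [sq_abs y, abs_nonneg y]
  calc (1 + y ^ 2) ^ ((1 : ℝ) / 4) ≤ ((1 + |y|) ^ 2) ^ ((1 : ℝ) / 4) :=
        Real.rpow_le_rpow (by positivity) h (by norm_num)
    _ = √(1 + |y|) := by
        rw [← Real.rpow_natCast, ← Real.rpow_mul (by positivity), Real.sqrt_eq_rpow]
        norm_num

/-- Convolving `|z|^{-1/2}` against an exponentially decaying weight gains `⟨y⟩^{-1/2}`. -/
theorem exists_weighted_exp_integral_bound {lam : ℝ} (hlam : 0 < lam) :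
    ∃ W > (0 : ℝ), ∀ y : ℝ,
      Integrable (fun z : ℝ => |z| / |z| ^ ((3 : ℝ) / 2) * Real.exp (-lam * |y - z|)) ∧
      ∫ z : ℝ, |z| / |z| ^ ((3 : ℝ) / 2) * Real.exp (-lam * |y - z|)
        ≤ W * (1 + y ^ 2) ^ (-(1 : ℝ) / 4) := by
  set Q : ℝ := 1 + 2 / lam with hQ
  have hQpos : 0 < Q := by positivity
  have hExp : Integrable (fun t : ℝ => Real.exp (-(lam / 2) * |t|)) :=
    integrable_exp_neg_mul_abs (by positivity)
  set E : ℝ := ∫ t : ℝ, Real.exp (-(lam / 2) * |t|) with hE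
  have hE0 : 0 ≤ E := integral_nonneg fun t => (Real.exp_pos _).le
  set m : ℝ := ∫ z : ℝ, minWeight z with hm
  have hm0 : 0 ≤ m := integral_nonneg minWeight_nonneg
  refine ⟨2 * Q * (E + m) + 1, by positivity, fun y => ?_⟩
  have hExpy : Integrable (fun z : ℝ => Real.exp (-(lam / 2) * |y - z|)) := hExp.comp_sub_left y
  have hdom : Integrable (fun z : ℝ => 2 * Q * (Real.exp (-(lam / 2) * |y - z|) + minWeight z)) :=
    (hExpy.add integrable_minWeight).const_mul _
  have hpt : ∀ z : ℝ, √(1 + |y|) * (|z| / |z| ^ ((3 : ℝ) / 2) * Real.exp (-lam * |y - z|))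
      ≤ 2 * Q * (Real.exp (-(lam / 2) * |y - z|) + minWeight z) := by
    intro z
    set t := |y - z| with ht
    have ht0 : 0 ≤ t := abs_nonneg _
    have hsplit : √(1 + |y|) ≤ √(1 + |z|) * (1 + t) := by
      have h1 : (1 + |y|) ≤ (1 + |z|) * (1 + t) := by
        have : |y| ≤ t + |z| := by
          have := abs_add_le (y - z) z; simpa [ht] using this
        nlinarith [abs_nonneg z]
      calc √(1 + |y|) ≤ √((1 + |z|) * (1 + t)) := Real.sqrt_le_sqrt h1
        _ = √(1 + |z|) * √(1 + t) := Real.sqrt_mul (by positivity) _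
        _ ≤ √(1 + |z|) * (1 + t) := by
            gcongr
            exact Real.sqrt_le_iff.mpr ⟨by positivity, by nlinarith⟩
    have hexp : (1 + t) * Real.exp (-lam * t) ≤ Q * Real.exp (-(lam / 2) * t) := by
      have h1 : 1 + t ≤ Q * Real.exp (lam / 2 * t) := by
        have h2 := Real.add_one_le_exp (lam / 2 * t)
        calc 1 + t ≤ Q * (lam / 2 * t + 1) := by
              rw [hQ]
              field_simp
              nlinarith [mul_nonneg hlam.le ht0, mul_nonneg (sq_nonneg lam) ht0]
          _ ≤ _ := by gcongr
      have h3 : Real.exp (-lam * t) = Real.exp (-(lam / 2) * t) * Real.exp (-(lam / 2) * t) := by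
        rw [← Real.exp_add]; ring_nf
      have h4 : Real.exp (lam / 2 * t) * Real.exp (-(lam / 2) * t) = 1 := by
        rw [← Real.exp_add]; ring_nf; simp
      calc (1 + t) * Real.exp (-lam * t)
          ≤ Q * Real.exp (lam / 2 * t) * Real.exp (-lam * t) := by gcongr
        _ = Q * (Real.exp (lam / 2 * t) * Real.exp (-(lam / 2) * t))
              * Real.exp (-(lam / 2) * t) := by rw [h3]; ring
        _ = _ := by rw [h4, mul_one]
    have hle1 : Real.exp (-(lam / 2) * t) ≤ 1 := Real.exp_le_one_iff.mpr (by nlinarith)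
    have hk : 0 ≤ |z| / |z| ^ ((3 : ℝ) / 2) := by positivity
    calc √(1 + |y|) * (|z| / |z| ^ ((3 : ℝ) / 2) * Real.exp (-lam * t))
        ≤ √(1 + |z|) * (1 + t) * (|z| / |z| ^ ((3 : ℝ) / 2) * Real.exp (-lam * t)) := by gcongr
      _ = (√(1 + |z|) * (|z| / |z| ^ ((3 : ℝ) / 2))) * ((1 + t) * Real.exp (-lam * t)) := by ring
      _ ≤ (2 * (1 + minWeight z)) * (Q * Real.exp (-(lam / 2) * t)) :=
          mul_le_mul (sqrt_mul_abs_div_le z) hexp (by positivity)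
            (by have := minWeight_nonneg z; positivity)
      _ = 2 * Q * (Real.exp (-(lam / 2) * t) + minWeight z * Real.exp (-(lam / 2) * t)) := by ring
      _ ≤ _ := by
          have := mul_le_of_le_one_right (minWeight_nonneg z) hle1
          gcongr
  have hs1 : 1 ≤ √(1 + |y|) := Real.one_le_sqrt.mpr (by linarith [abs_nonneg y])
  have hInt : Integrable (fun z : ℝ => |z| / |z| ^ ((3 : ℝ) / 2) * Real.exp (-lam * |y - z|)) := by
    refine hdom.mono' (by fun_prop) (Filter.Eventually.of_forall fun z => ?_)
    have h0 : 0 ≤ |z| / |z| ^ ((3 : ℝ) / 2) * Real.exp (-lam * |y - z|) := by positivity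
    rw [Real.norm_of_nonneg h0]
    exact (le_mul_of_one_le_left h0 hs1).trans (hpt z)
  refine ⟨hInt, ?_⟩
  have hI := integral_mono (hInt.const_mul (√(1 + |y|))) hdom hpt
  rw [integral_const_mul, integral_const_mul, integral_add hExpy integrable_minWeight,
    integral_sub_left_eq_self (fun t : ℝ => Real.exp (-(lam / 2) * |t|)) volume y] at hI
  have hI0 : 0 ≤ ∫ z : ℝ, |z| / |z| ^ ((3 : ℝ) / 2) * Real.exp (-lam * |y - z|) :=
    integral_nonneg fun z => by positivity
  have hpow : (1 + y ^ 2) ^ (-(1 : ℝ) / 4) = ((1 + y ^ 2) ^ ((1 : ℝ) / 4))⁻¹ := by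
    rw [← Real.rpow_neg (by positivity)]; norm_num
  rw [hpow, ← div_eq_mul_inv, le_div_iff₀ (by positivity), mul_comm]
  calc _ ≤ √(1 + |y|) * ∫ z : ℝ, |z| / |z| ^ ((3 : ℝ) / 2) * Real.exp (-lam * |y - z|) := by
        gcongr; exact one_add_sq_rpow_le_sqrt y
    _ ≤ 2 * Q * (E + m) := hI
    _ ≤ _ := by linarith

/-- The unnormalised one-dimensional singular integral of order `1/2`. -/
noncomputable def halfLap (f : ℝ → ℝ) (u : ℝ) : ℝ :=
  ∫ z : ℝ, (f u - f (u - z)) / |z| ^ ((3 : ℝ) / 2)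

/-- The tent function supported in `[-1, 1]`. -/
noncomputable def tent (x : ℝ) : ℝ := max 0 (1 - |x|)

theorem continuous_tent : Continuous tent := by unfold tent; fun_prop

theorem tent_nonneg (x : ℝ) : 0 ≤ tent x := le_max_left _ _

theorem tent_le_one (x : ℝ) : tent x ≤ 1 := max_le zero_le_one (by linarith [abs_nonneg x])

theorem tent_eq_zero {x : ℝ} (hx : 1 ≤ |x|) : tent x = 0 := max_eq_left (by linarith)

theorem abs_tent_sub_le (u v : ℝ) : |tent u - tent v| ≤ |u - v| := by
  unfold tent
  refine (abs_max_sub_max_le_max _ _ _ _).trans ?_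
  simp only [sub_self, abs_zero, sub_sub_sub_cancel_left]
  refine max_le (abs_nonneg _) ?_
  rw [abs_sub_comm u v]
  exact abs_abs_sub_abs_le v u

theorem hasCompactSupport_tent : HasCompactSupport tent :=
  HasCompactSupport.intro (isCompact_Icc (a := -1) (b := 1)) fun x hx => by
    apply tent_eq_zero
    by_contra h
    exact hx (Set.mem_Icc.mpr (abs_le.mp (not_le.mp h).le))

theorem integrable_tent : Integrable tent :=
  continuous_tent.integrable_of_hasCompactSupport hasCompactSupport_tent

theorem integral_tent_pos : 0 < ∫ x, tent x :=
  continuous_tent.integral_pos_of_hasCompactSupport_nonneg_nonzero hasCompactSupport_tent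
    tent_nonneg (x := 0) (by simp [tent])

theorem abs_tent_sub_shift_le (u z : ℝ) :
    |tent u - tent (u - z)| ≤ min |z| 1 *
      (Set.indicator (Set.Icc (-1) 1) 1 u + Set.indicator (Set.Icc (-1) 1) 1 (u - z)) := by
  have hmin : |tent u - tent (u - z)| ≤ min |z| 1 := by
    refine le_min (by simpa using abs_tent_sub_le u (u - z)) ?_
    rw [abs_le]
    constructor <;> linarith [tent_nonneg u, tent_nonneg (u - z), tent_le_one u, tent_le_one (u - z)]
  have hz0 : (0 : ℝ) ≤ min |z| 1 := by positivity
  by_cases h1 : u ∈ Set.Icc (-1 : ℝ) 1 <;> by_cases h2 : u - z ∈ Set.Icc (-1 : ℝ) 1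
  · rw [Set.indicator_of_mem h1, Set.indicator_of_mem h2]; simp only [Pi.one_apply]; linarith
  · rw [Set.indicator_of_mem h1, Set.indicator_of_notMem h2]; simp only [Pi.one_apply]; linarith
  · rw [Set.indicator_of_notMem h1, Set.indicator_of_mem h2]; simp only [Pi.one_apply]; linarith
  · have out : ∀ x : ℝ, x ∉ Set.Icc (-1 : ℝ) 1 → tent x = 0 := fun x hx => by
      apply tent_eq_zero
      by_contra h
      exact hx (Set.mem_Icc.mpr (abs_le.mp (not_le.mp h).le))
    rw [out _ h1, out _ h2, Set.indicator_of_notMem h1, Set.indicator_of_notMem h2]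
    simp

theorem integrable_tent_diff :
    Integrable (fun p : ℝ × ℝ => (tent p.1 - tent (p.1 - p.2)) / |p.2| ^ ((3 : ℝ) / 2))
      (volume.prod volume) := by
  have hs : Integrable (Set.indicator (Set.Icc (-1 : ℝ) 1) (1 : ℝ → ℝ)) :=
    (integrable_indicator_iff measurableSet_Icc).mpr
      (integrableOn_const (by simp) (by simp))
  have h1 : Integrable (fun p : ℝ × ℝ =>
      Set.indicator (Set.Icc (-1 : ℝ) 1) (1 : ℝ → ℝ) p.1 * minWeight p.2) (volume.prod volume) :=
    hs.mul_prod integrable_minWeight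
  have h2 : Integrable (fun p : ℝ × ℝ =>
      minWeight p.2 * Set.indicator (Set.Icc (-1 : ℝ) 1) (1 : ℝ → ℝ) (p.1 - p.2))
      (volume.prod volume) :=
    integrable_minWeight.convolution_integrand (ContinuousLinearMap.mul ℝ ℝ) hs
  have hc := continuous_tent
  refine (h1.add h2).mono' (Measurable.aestronglyMeasurable (by fun_prop))
    (Filter.Eventually.of_forall fun p => ?_)
  rw [norm_div, Real.norm_eq_abs, Real.norm_of_nonneg (by positivity : (0:ℝ) ≤ |p.2| ^ ((3 : ℝ) / 2))]
  calc _ ≤ _ := div_le_div_of_nonneg_right (abs_tent_sub_shift_le p.1 p.2) (by positivity)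
    _ = _ := by simp only [Pi.add_apply, minWeight]; ring

theorem integrable_halfLap_tent : Integrable (halfLap tent) :=
  integrable_tent_diff.integral_prod_left

theorem abs_sub_shift_div_le {f : ℝ → ℝ} {M n : ℝ} (hM : ∀ x, |f x| ≤ M)
    (hL : ∀ x y, |f x - f y| ≤ n * |x - y|) (u z : ℝ) :
    |(f u - f (u - z)) / |z| ^ ((3 : ℝ) / 2)| ≤ (n + 2 * M) * minWeight z := by
  rw [abs_div, abs_of_nonneg (by positivity : (0:ℝ) ≤ |z| ^ ((3 : ℝ) / 2)), minWeight,
    ← mul_div_assoc]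
  refine div_le_div_of_nonneg_right ?_ (by positivity)
  have h1 : |f u - f (u - z)| ≤ n * |z| := by simpa using hL u (u - z)
  have h2 : |f u - f (u - z)| ≤ 2 * M := by
    have := abs_sub (f u) (f (u - z))
    linarith [hM u, hM (u - z)]
  have hn : 0 ≤ n := by have := hL 1 0; simp at this; exact (abs_nonneg _).trans this
  have hM0 : 0 ≤ M := (abs_nonneg _).trans (hM 0)
  rcases le_total |z| 1 with h | h
  · rw [min_eq_left h]; nlinarith [abs_nonneg z]
  · rw [min_eq_right h]; linarith

theorem continuous_of_abs_sub_le {f : ℝ → ℝ} {n : ℝ} (hL : ∀ x y, |f x - f y| ≤ n * |x - y|) :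
    Continuous f := by
  have hn : 0 ≤ n := by have := hL 1 0; simp at this; exact (abs_nonneg _).trans this
  exact (LipschitzWith.of_dist_le_mul (K := ⟨n, hn⟩) fun x y => by
    rw [Real.dist_eq, Real.dist_eq]; exact hL x y).continuous

theorem integrable_lipschitz_diff {f : ℝ → ℝ} {M n : ℝ} (hM : ∀ x, |f x| ≤ M)
    (hL : ∀ x y, |f x - f y| ≤ n * |x - y|) (u : ℝ) :
    Integrable (fun z : ℝ => (f u - f (u - z)) / |z| ^ ((3 : ℝ) / 2)) := by
  have hc := continuous_of_abs_sub_le hL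
  exact (integrable_minWeight.const_mul (n + 2 * M)).mono'
    (Measurable.aestronglyMeasurable (by fun_prop))
    (Filter.Eventually.of_forall (abs_sub_shift_div_le hM hL u))

theorem integrable_lipschitz_tent {f : ℝ → ℝ} {M n : ℝ} (hM : ∀ x, |f x| ≤ M)
    (hL : ∀ x y, |f x - f y| ≤ n * |x - y|) :
    Integrable (fun p : ℝ × ℝ => tent p.1 * ((f p.1 - f (p.1 - p.2)) / |p.2| ^ ((3 : ℝ) / 2)))
      (volume.prod volume) := by
  have hc := continuous_of_abs_sub_le hL
  have ht := continuous_tent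
  refine (integrable_tent.mul_prod (integrable_minWeight.const_mul (n + 2 * M))).mono'
    (Measurable.aestronglyMeasurable (by fun_prop)) (Filter.Eventually.of_forall fun p => ?_)
  rw [norm_mul, Real.norm_of_nonneg (tent_nonneg _)]
  exact mul_le_mul_of_nonneg_left (abs_sub_shift_div_le hM hL p.1 p.2) (tent_nonneg _)

/-- Symmetry of the singular integral operator, tested on a tent function. -/
theorem integral_mul_halfLap_tent {f : ℝ → ℝ} {M n : ℝ} (hM : ∀ x, |f x| ≤ M)
    (hL : ∀ x y, |f x - f y| ≤ n * |x - y|) :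
    ∫ u, f u * halfLap tent u = ∫ u, tent u * halfLap f u := by
  have hc := continuous_of_abs_sub_le hL
  have ht := continuous_tent
  have hft : Integrable (fun p : ℝ × ℝ =>
      f p.1 * ((tent p.1 - tent (p.1 - p.2)) / |p.2| ^ ((3 : ℝ) / 2))) (volume.prod volume) :=
    integrable_tent_diff.bdd_mul (c := M) (Measurable.aestronglyMeasurable (by fun_prop))
      (Filter.Eventually.of_forall fun p => hM p.1)
  have hinner : ∀ z : ℝ, ∫ u, f u * ((tent u - tent (u - -z)) / |-z| ^ ((3 : ℝ) / 2))
      = ∫ u, tent u * ((f u - f (u - z)) / |z| ^ ((3 : ℝ) / 2)) := by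
    intro z
    have hbdd : ∀ g : ℝ → ℝ, Integrable g → Integrable (fun u => f u * g u) := fun g hg =>
      hg.bdd_mul (c := M) hc.aestronglyMeasurable (Filter.Eventually.of_forall hM)
    have hi1 := hbdd tent integrable_tent
    have hi2 := hbdd _ (integrable_tent.comp_add_right z)
    have hi3 : Integrable (fun u => f (u - z) * tent u) :=
      integrable_tent.bdd_mul (c := M) (Measurable.aestronglyMeasurable (by fun_prop))
        (Filter.Eventually.of_forall fun u => hM (u - z))
    have hshift : ∫ u, f u * tent (u + z) = ∫ u, f (u - z) * tent u := by
      rw [← integral_sub_right_eq_self (fun u => f u * tent (u + z)) z]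
      simp
    have e1 : ∀ u, f u * ((tent u - tent (u - -z)) / |-z| ^ ((3 : ℝ) / 2))
        = (f u * tent u - f u * tent (u + z)) / |z| ^ ((3 : ℝ) / 2) := fun u => by
      rw [abs_neg, sub_neg_eq_add]; ring
    have e2 : ∀ u, tent u * ((f u - f (u - z)) / |z| ^ ((3 : ℝ) / 2))
        = (f u * tent u - f (u - z) * tent u) / |z| ^ ((3 : ℝ) / 2) := fun u => by ring
    simp_rw [e1, e2]
    rw [integral_div, integral_div, integral_sub hi1 hi2, integral_sub hi1 hi3, hshift]
  calc ∫ u, f u * halfLap tent u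
      = ∫ u, ∫ z, f u * ((tent u - tent (u - z)) / |z| ^ ((3 : ℝ) / 2)) := by
        simp_rw [halfLap, integral_const_mul]
    _ = ∫ z, ∫ u, f u * ((tent u - tent (u - z)) / |z| ^ ((3 : ℝ) / 2)) :=
        integral_integral_swap hft
    _ = ∫ z, ∫ u, f u * ((tent u - tent (u - -z)) / |-z| ^ ((3 : ℝ) / 2)) :=
        (integral_neg_eq_self
          (fun z => ∫ u, f u * ((tent u - tent (u - z)) / |z| ^ ((3 : ℝ) / 2))) volume).symm
    _ = ∫ z, ∫ u, tent u * ((f u - f (u - z)) / |z| ^ ((3 : ℝ) / 2)) :=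
        integral_congr_ae (Filter.Eventually.of_forall hinner)
    _ = ∫ u, ∫ z, tent u * ((f u - f (u - z)) / |z| ^ ((3 : ℝ) / 2)) :=
        (integral_integral_swap (integrable_lipschitz_tent hM hL)).symm
    _ = _ := by simp_rw [halfLap, integral_const_mul]

/-- The upper `n`-Lipschitz envelope `x ↦ max_y (f y - n |x - y|)` of a bounded continuous `f`,
together with a choice of maximisers. -/
theorem exists_lipschitz_envelope {f : ℝ → ℝ} {M n : ℝ} (hf : Continuous f)
    (hM : ∀ x, |f x| ≤ M) (hn : 0 < n) :
    ∃ g π : ℝ → ℝ, (∀ x, g x = f (π x) - n * |x - π x|) ∧ ∀ x y, f y - n * |x - y| ≤ g x := by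
  have hM0 : 0 ≤ M := (abs_nonneg _).trans (hM 0)
  have key : ∀ x, ∃ p, ∀ y, f y - n * |x - y| ≤ f p - n * |x - p| := by
    intro x
    obtain ⟨p, -, hp⟩ := (isCompact_closedBall x (2 * M / n)).exists_isMaxOn
      ⟨x, Metric.mem_closedBall_self (by positivity)⟩
      (f := fun y => f y - n * |x - y|) (by fun_prop)
    refine ⟨p, fun y => ?_⟩
    by_cases hy : y ∈ Metric.closedBall x (2 * M / n)
    · exact hp hy
    · have hx := hp (Metric.mem_closedBall_self (x := x) (ε := 2 * M / n) (by positivity))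
      simp only [Set.mem_ofPred_eq, sub_self, abs_zero, mul_zero, sub_zero] at hx
      rw [Metric.mem_closedBall, not_le, Real.dist_eq, div_lt_iff₀ hn, abs_sub_comm] at hy
      linarith [(abs_le.mp (hM x)).1, (abs_le.mp (hM y)).2]
  choose π hπ using key
  exact ⟨fun x => f (π x) - n * |x - π x|, π, fun x => rfl, hπ⟩

/-- An everywhere pointwise upper bound on the singular integral of a bounded continuous function
passes to the weak formulation tested on a tent function. -/
theorem integral_mul_halfLap_tent_le {f : ℝ → ℝ} {M B : ℝ} (hf : Continuous f)
    (hM : ∀ x, |f x| ≤ M)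
    (hInt : ∀ v, Integrable (fun z : ℝ => (f v - f (v - z)) / |z| ^ ((3 : ℝ) / 2)))
    (hB : ∀ v, |v| ≤ 2 → halfLap f v ≤ B) :
    ∫ u, f u * halfLap tent u ≤ B * ∫ u, tent u := by
  have hM0 : 0 ≤ M := (abs_nonneg _).trans (hM 0)
  set n : ℕ → ℝ := fun k => k + (1 + 2 * M) with hn
  have hnpos : ∀ k, 0 < n k := fun k => by positivity
  choose g π hg hmax using fun k => exists_lipschitz_envelope hf hM (hnpos k)
  have hfg : ∀ k x, f x ≤ g k x := fun k x => by simpa using hmax k x x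
  have hgle : ∀ k x, g k x ≤ f (π k x) := fun k x => by
    rw [hg]; linarith [mul_nonneg (hnpos k).le (abs_nonneg (x - π k x))]
  have hgM : ∀ k x, |g k x| ≤ M := fun k x => abs_le.mpr
    ⟨(abs_le.mp (hM x)).1.trans (hfg k x), (hgle k x).trans (abs_le.mp (hM _)).2⟩
  have hπ : ∀ k x, n k * |x - π k x| ≤ 2 * M := fun k x => by
    have h1 := hfg k x
    rw [hg] at h1
    linarith [(abs_le.mp (hM x)).1, (abs_le.mp (hM (π k x))).2]
  have hlip1 : ∀ k x y, g k x - g k y ≤ n k * |x - y| := fun k x y => by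
    have h1 := hmax k y (π k x)
    have h2 : |y - π k x| ≤ |x - y| + |x - π k x| := by
      have := abs_add_le (y - x) (x - π k x)
      rw [abs_sub_comm y x] at this; simpa using this
    have h3 := mul_le_mul_of_nonneg_left h2 (hnpos k).le
    rw [hg k x]; linarith
  have hlip : ∀ k x y, |g k x - g k y| ≤ n k * |x - y| := fun k x y =>
    abs_sub_le_iff.mpr ⟨hlip1 k x y, by rw [abs_sub_comm]; exact hlip1 k y x⟩
  have hcomp : ∀ k x, |x| ≤ 1 → halfLap (g k) x ≤ B := fun k x hx => by
    have hπ1 : |x - π k x| ≤ 1 := by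
      by_contra h
      have h1 := hπ k x
      have h2 : 1 + 2 * M ≤ n k := by simp [hn]
      have h3 := mul_le_mul h2 (not_le.mp h).le zero_le_one (hnpos k).le
      linarith
    have hπ2 : |π k x| ≤ 2 := by
      have := abs_sub_abs_le_abs_sub (π k x) x
      rw [abs_sub_comm] at this; linarith
    refine le_trans ?_ (hB (π k x) hπ2)
    refine integral_mono (integrable_lipschitz_diff (hgM k) (hlip k) x) (hInt _) fun z => ?_
    refine div_le_div_of_nonneg_right ?_ (by positivity)
    have h1 := hmax k (x - z) (π k x - z)
    rw [sub_sub_sub_cancel_right] at h1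
    rw [hg k x]; linarith
  have hbound : ∀ k, ∫ u, g k u * halfLap tent u ≤ B * ∫ u, tent u := fun k => by
    rw [integral_mul_halfLap_tent (hgM k) (hlip k), ← integral_const_mul]
    have hi : Integrable (fun u => tent u * halfLap (g k) u) := by
      have := (integrable_lipschitz_tent (hgM k) (hlip k)).integral_prod_left
      simpa only [integral_const_mul, halfLap] using this
    refine integral_mono hi (integrable_tent.const_mul B) fun u => ?_
    rcases le_total |u| 1 with hu | hu
    · simp only
      rw [mul_comm B]; exact mul_le_mul_of_nonneg_left (hcomp k u hu) (tent_nonneg u)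
    · simp [tent_eq_zero hu]
  have hntop : Filter.Tendsto n Filter.atTop Filter.atTop :=
    Filter.tendsto_atTop_add_const_right _ _ tendsto_natCast_atTop_atTop
  have hlim : ∀ x, Filter.Tendsto (fun k => g k x) Filter.atTop (nhds (f x)) := fun x => by
    have h0 : Filter.Tendsto (fun k => 2 * M / n k) Filter.atTop (nhds 0) :=
      hntop.const_div_atTop _
    have h1 : Filter.Tendsto (fun k => π k x) Filter.atTop (nhds x) := by
      rw [tendsto_iff_dist_tendsto_zero]
      refine squeeze_zero (fun _ => dist_nonneg) (fun k => ?_) h0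
      rw [Real.dist_eq, abs_sub_comm, le_div_iff₀ (hnpos k), mul_comm]
      exact hπ k x
    exact tendsto_of_tendsto_of_tendsto_of_le_of_le tendsto_const_nhds
      ((hf.tendsto x).comp h1) (fun k => hfg k x) (fun k => hgle k x)
  refine le_of_tendsto (tendsto_integral_of_dominated_convergence
    (fun u => M * ‖halfLap tent u‖) (fun k => ?_) (integrable_halfLap_tent.norm.const_mul M)
    (fun k => Filter.Eventually.of_forall fun u => ?_)
    (Filter.Eventually.of_forall fun u => (hlim u).mul_const _))
    (Filter.Eventually.of_forall hbound)
  · exact (continuous_of_abs_sub_le (hlip k)).aestronglyMeasurable.mul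
      integrable_halfLap_tent.aestronglyMeasurable
  · rw [norm_mul]
    exact mul_le_mul_of_nonneg_right (hgM k u) (norm_nonneg _)

/-- Away from the support of the tent function the singular integral is an ordinary average. -/
theorem halfLap_tent_eq {w : ℝ} (hw : 1 ≤ |w|) :
    halfLap tent w = -∫ s, tent s / |w - s| ^ ((3 : ℝ) / 2) := by
  rw [halfLap, ← integral_sub_left_eq_self (fun s => tent s / |w - s| ^ ((3 : ℝ) / 2)) volume w,
    ← integral_neg]
  simp [tent_eq_zero hw, neg_div]

theorem abs_rpow_three_halves_le {x a : ℝ} (h : |x| ≤ 2 * |a|) :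
    |x| ^ ((3 : ℝ) / 2) ≤ 4 * |a| ^ ((3 : ℝ) / 2) := by
  have h2 : (2 : ℝ) ^ ((3 : ℝ) / 2) ≤ 4 := by
    calc (2 : ℝ) ^ ((3 : ℝ) / 2) ≤ (2 : ℝ) ^ (2 : ℝ) :=
          Real.rpow_le_rpow_of_exponent_le (by norm_num) (by norm_num)
      _ = 4 := by norm_num
  calc |x| ^ ((3 : ℝ) / 2) ≤ (2 * |a|) ^ ((3 : ℝ) / 2) :=
        Real.rpow_le_rpow (abs_nonneg _) h (by norm_num)
    _ = 2 ^ ((3 : ℝ) / 2) * |a| ^ ((3 : ℝ) / 2) := Real.mul_rpow (by norm_num) (abs_nonneg _)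
    _ ≤ _ := by gcongr

theorem tent_div_le {w s r : ℝ} (hw : w ≠ 0) (hs : 2 * |r| ≤ |w| ∨ 1 ≤ |s|) :
    tent s / |w - r| ^ ((3 : ℝ) / 2) ≤ 4 / |w| ^ ((3 : ℝ) / 2) * tent s := by
  rcases hs with hs | hs
  · have h1 : |w| ≤ 2 * |w - r| := by
      have := abs_sub_abs_le_abs_sub w r; linarith
    have hw' : 0 < |w| := abs_pos.mpr hw
    have h2 : 0 < |w - r| := by linarith
    rw [div_mul_eq_mul_div, div_le_div_iff₀ (by positivity) (by positivity)]
    nlinarith [abs_rpow_three_halves_le h1, tent_nonneg s]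
  · simp [tent_eq_zero hs]

theorem exists_halfLap_tent_bound :
    ∃ A, 0 ≤ A ∧ ∀ w, w ≠ 0 → |halfLap tent w| ≤ A / |w| ^ ((3 : ℝ) / 2) := by
  set A₁ : ℝ := (1 + 2 * 1) * ∫ z, minWeight z with hA₁
  have hA₁0 : 0 ≤ A₁ := mul_nonneg (by norm_num) (integral_nonneg minWeight_nonneg)
  have hT := integral_tent_pos
  refine ⟨12 * A₁ + 4 * ∫ s, tent s, by positivity, fun w hw => ?_⟩
  have hw' : 0 < |w| := abs_pos.mpr hw
  rcases le_total |w| 2 with h | h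
  · have h1 : |halfLap tent w| ≤ A₁ := by
      rw [hA₁, ← integral_const_mul, ← Real.norm_eq_abs, halfLap]
      refine norm_integral_le_of_norm_le (integrable_minWeight.const_mul _)
        (Filter.Eventually.of_forall fun z => ?_)
      exact abs_sub_shift_div_le
        (fun x => by rw [abs_of_nonneg (tent_nonneg x)]; exact tent_le_one x)
        (fun x y => by rw [one_mul]; exact abs_tent_sub_le x y) w z
    have h2 : |w| ^ ((3 : ℝ) / 2) ≤ 4 := by
      have := abs_rpow_three_halves_le (x := w) (a := 1) (by simpa using h)
      simpa using this
    rw [le_div_iff₀ (by positivity)]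
    nlinarith [mul_le_mul h1 h2 (by positivity) hA₁0]
  · rw [halfLap_tent_eq (by linarith), abs_neg]
    calc |∫ s, tent s / |w - s| ^ ((3 : ℝ) / 2)|
        ≤ ∫ s, 4 / |w| ^ ((3 : ℝ) / 2) * tent s := by
          rw [← Real.norm_eq_abs]
          refine norm_integral_le_of_norm_le (integrable_tent.const_mul _)
            (Filter.Eventually.of_forall fun s => ?_)
          rw [Real.norm_of_nonneg (div_nonneg (tent_nonneg s) (by positivity))]
          refine tent_div_le hw ?_
          rcases le_total |s| 1 with h1 | h1
          · left; linarith
          · right; exact h1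
      _ = (4 * ∫ s, tent s) / |w| ^ ((3 : ℝ) / 2) := by rw [integral_const_mul]; ring
      _ ≤ _ := by gcongr; linarith

/-- The rescaled mollified kernel of the singular integral operator. -/
noncomputable def mollKernel (N w : ℝ) : ℝ := N ^ ((3 : ℝ) / 2) * halfLap tent (N * w)

theorem integrable_mollKernel {N : ℝ} (hN : 0 < N) : Integrable (mollKernel N) :=
  (integrable_halfLap_tent.comp_mul_left' hN.ne').const_mul _

theorem tendsto_mollKernel {w : ℝ} (hw : w ≠ 0) :
    Filter.Tendsto (fun k : ℕ => mollKernel (k + 1) w) Filter.atTop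
      (nhds (-((∫ s, tent s) / |w| ^ ((3 : ℝ) / 2)))) := by
  have hw' : 0 < |w| := abs_pos.mpr hw
  have hNtop : Filter.Tendsto (fun k : ℕ => (k : ℝ) + 1) Filter.atTop Filter.atTop :=
    Filter.tendsto_atTop_add_const_right _ _ tendsto_natCast_atTop_atTop
  have ht := continuous_tent
  have hlarge : ∀ᶠ k : ℕ in Filter.atTop, 2 ≤ ((k : ℝ) + 1) * |w| :=
    (hNtop.atTop_mul_const hw').eventually_ge_atTop 2
  have hlim : Filter.Tendsto
      (fun k : ℕ => ∫ s, tent s / |w - s / ((k : ℝ) + 1)| ^ ((3 : ℝ) / 2)) Filter.atTop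
      (nhds (∫ s, tent s / |w| ^ ((3 : ℝ) / 2))) := by
    refine tendsto_integral_filter_of_dominated_convergence
      (fun s => 4 / |w| ^ ((3 : ℝ) / 2) * tent s)
      (Filter.Eventually.of_forall fun k => Measurable.aestronglyMeasurable (by fun_prop)) ?_
      (integrable_tent.const_mul _) (Filter.Eventually.of_forall fun s => ?_)
    · filter_upwards [hlarge] with k hk
      refine Filter.Eventually.of_forall fun s => ?_
      have hk0 : (0 : ℝ) < (k : ℝ) + 1 := by positivity
      rw [Real.norm_of_nonneg (div_nonneg (tent_nonneg s) (by positivity))]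
      have hr : |s / ((k : ℝ) + 1)| = |s| / ((k : ℝ) + 1) := by rw [abs_div, abs_of_pos hk0]
      refine tent_div_le hw ?_
      rcases le_total |s| 1 with h1 | h1
      · left
        rw [hr, ← mul_div_assoc, div_le_iff₀ hk0]
        linarith
      · right; exact h1
    · have h0 : Filter.Tendsto (fun k : ℕ => w - s / ((k : ℝ) + 1)) Filter.atTop (nhds w) := by
        simpa using tendsto_const_nhds.sub (hNtop.const_div_atTop s)
      exact tendsto_const_nhds.div (h0.abs.rpow_const (Or.inl hw'.ne')) (by positivity)
  rw [← integral_div]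
  refine hlim.neg.congr' ?_
  filter_upwards [hlarge] with k hk
  have hk0 : (0 : ℝ) < (k : ℝ) + 1 := by positivity
  have habs : |((k : ℝ) + 1) * w| = ((k : ℝ) + 1) * |w| := by rw [abs_mul, abs_of_pos hk0]
  rw [mollKernel, halfLap_tent_eq (by rw [habs]; linarith), mul_neg, ← integral_const_mul]
  congr 2
  ext s
  have h1 : |((k : ℝ) + 1) * w - s| = ((k : ℝ) + 1) * |w - s / ((k : ℝ) + 1)| := by
    rw [← abs_of_pos hk0, ← abs_mul, abs_of_pos hk0]
    congr 1; field_simp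
  rw [h1, Real.mul_rpow hk0.le (abs_nonneg _)]
  have h2 : ((k : ℝ) + 1) ^ ((3 : ℝ) / 2) ≠ 0 := by positivity
  rw [mul_div_assoc', mul_div_mul_left _ _ h2]

theorem halfLap_rescale (f : ℝ → ℝ) {N : ℝ} (hN : 0 < N) (y v : ℝ) :
    halfLap (fun v => f (y - v / N)) v = (√N)⁻¹ * halfLap f (y - v / N) := by
  have hN' : N ≠ 0 := hN.ne'
  have hsub : ∀ z : ℝ, (f (y - v / N) - f (y - (v - z) / N)) / |z| ^ ((3 : ℝ) / 2)
      = (N * √N)⁻¹ * (fun x => (f (y - v / N) - f (y - v / N - x)) / |x| ^ ((3 : ℝ) / 2))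
        ((-N)⁻¹ * z) := by
    intro z
    have h1 : |(-N)⁻¹ * z| = N⁻¹ * |z| := by rw [abs_mul, abs_inv, abs_neg, abs_of_pos hN]
    have h2 : N⁻¹ ^ ((3 : ℝ) / 2) = (N * √N)⁻¹ := by
      have := abs_rpow_three_halves N
      rw [abs_of_pos hN] at this
      rw [Real.inv_rpow hN.le, this]
    have h3 : y - (v - z) / N = y - v / N - (-N)⁻¹ * z := by field_simp; ring
    simp only
    rw [h1, Real.mul_rpow (by positivity) (abs_nonneg z), h2, h3]
    have h4 : (N * √N)⁻¹ ≠ 0 := by positivity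
    rw [mul_div_assoc', mul_div_mul_left _ _ h4]
  simp only [halfLap]
  have hcv := Measure.integral_comp_mul_left
    (fun x => (f (y - v / N) - f (y - v / N - x)) / |x| ^ ((3 : ℝ) / 2)) (-N)⁻¹
  simp_rw [hsub]
  rw [integral_const_mul, hcv]
  simp only [inv_inv, abs_neg, abs_of_pos hN, smul_eq_mul]
  field_simp

theorem integrable_rescale {f : ℝ → ℝ} {N : ℝ} (hN : 0 < N) (y v : ℝ)
    (hInt : Integrable (fun z : ℝ =>
      (f (y - v / N) - f (y - v / N - z)) / |z| ^ ((3 : ℝ) / 2))) :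
    Integrable (fun z : ℝ => (f (y - v / N) - f (y - (v - z) / N)) / |z| ^ ((3 : ℝ) / 2)) := by
  have hN' : (-N)⁻¹ ≠ 0 := inv_ne_zero (neg_ne_zero.mpr hN.ne')
  refine ((hInt.comp_mul_left' hN').const_mul (N⁻¹ ^ ((3 : ℝ) / 2))).congr
    (Filter.Eventually.of_forall fun z => ?_)
  have h1 : |(-N)⁻¹ * z| = N⁻¹ * |z| := by rw [abs_mul, abs_inv, abs_neg, abs_of_pos hN]
  have h3 : y - v / N - (-N)⁻¹ * z = y - (v - z) / N := by field_simp; ring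
  have h4 : N⁻¹ ^ ((3 : ℝ) / 2) ≠ 0 := by positivity
  simp only
  rw [h1, Real.mul_rpow (by positivity) (abs_nonneg z), h3, mul_div_assoc',
    mul_div_mul_left _ _ h4]

theorem integral_mul_mollKernel_le {f : ℝ → ℝ} {M B N y : ℝ} (hN : 1 ≤ N) (hf : Continuous f)
    (hM : ∀ x, |f x| ≤ M)
    (hInt : ∀ a, Integrable (fun z : ℝ => (f a - f (a - z)) / |z| ^ ((3 : ℝ) / 2)))
    (hB : ∀ a, |a - y| ≤ 2 → halfLap f a ≤ B) :
    ∫ w, f (y - w) * mollKernel N w ≤ B * ∫ u, tent u := by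
  have hN0 : 0 < N := one_pos.trans_le hN
  have hs : 0 < √N := Real.sqrt_pos.mpr hN0
  have hle := integral_mul_halfLap_tent_le (f := fun v => f (y - v / N)) (B := (√N)⁻¹ * B)
    (by fun_prop) (fun x => hM _) (fun v => integrable_rescale hN0 y v (hInt _)) (fun v hv => by
      rw [halfLap_rescale f hN0]
      refine mul_le_mul_of_nonneg_left (hB _ ?_) (by positivity)
      rw [sub_sub_cancel_left, abs_neg, abs_div, abs_of_pos hN0]
      exact (div_le_self (abs_nonneg v) hN).trans hv)
  have heq : ∀ w, f (y - w) * mollKernel N w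
      = N ^ ((3 : ℝ) / 2) * (fun v => f (y - v / N) * halfLap tent v) (N * w) := fun w => by
    simp only [mollKernel]
    rw [mul_div_cancel_left₀ w hN0.ne']; ring
  have hcv := Measure.integral_comp_mul_left (fun v => f (y - v / N) * halfLap tent v) N
  simp_rw [heq]
  rw [integral_const_mul, hcv]
  have h3 := abs_rpow_three_halves N
  rw [abs_of_pos hN0] at h3
  rw [h3, smul_eq_mul, abs_of_pos (inv_pos.mpr hN0)]
  calc N * √N * (N⁻¹ * ∫ u, f (y - u / N) * halfLap tent u)
      = √N * ∫ u, f (y - u / N) * halfLap tent u := by field_simp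
    _ ≤ √N * ((√N)⁻¹ * B * ∫ u, tent u) := by gcongr
    _ = _ := by field_simp

theorem halfLap_neg (f : ℝ → ℝ) (u : ℝ) : halfLap (fun x => -f x) u = -halfLap f u := by
  simp only [halfLap]
  rw [← integral_neg]
  congr 1; ext z; ring

theorem abs_integral_mul_mollKernel_le {f : ℝ → ℝ} {M B N y : ℝ} (hN : 1 ≤ N)
    (hf : Continuous f) (hM : ∀ x, |f x| ≤ M)
    (hInt : ∀ a, Integrable (fun z : ℝ => (f a - f (a - z)) / |z| ^ ((3 : ℝ) / 2)))
    (hB : ∀ a, |a - y| ≤ 2 → |halfLap f a| ≤ B) :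
    |∫ w, f (y - w) * mollKernel N w| ≤ B * ∫ u, tent u := by
  have h1 := integral_mul_mollKernel_le hN hf hM hInt fun a ha => (abs_le.mp (hB a ha)).2
  have h2 := integral_mul_mollKernel_le (f := fun x => -f x) (M := M) (B := B) (y := y) hN hf.neg
    (fun x => by rw [abs_neg]; exact hM x)
    (fun a => (hInt a).neg.congr (Filter.Eventually.of_forall fun z => by
      simp only [Pi.neg_apply]; ring))
    (fun a ha => by rw [halfLap_neg]; linarith [(abs_le.mp (hB a ha)).1])
  simp only [neg_mul, integral_neg] at h2
  exact abs_le.mpr ⟨by linarith, h1⟩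

theorem integral_mollKernel {N : ℝ} (hN : 1 ≤ N) : ∫ w, mollKernel N w = 0 := by
  have h := abs_integral_mul_mollKernel_le (f := fun _ => (1 : ℝ)) (M := 1) (B := 0) (y := 0) hN
    continuous_const (by simp) (by simp) (by simp [halfLap])
  simpa using h

/-- A bound on the mollified singular integral, uniform in the scale, passes to the pointwise
singular integral. -/
theorem abs_halfLap_le_of_mollKernel {H : ℝ → ℝ} {M B y : ℝ} (hH : AEStronglyMeasurable H)
    (hM : ∀ x, |H x| ≤ M)
    (hInt : Integrable (fun z : ℝ => (H y - H (y - z)) / |z| ^ ((3 : ℝ) / 2)))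
    (hB : ∀ N : ℝ, 1 ≤ N → |∫ w, H (y - w) * mollKernel N w| ≤ B * ∫ u, tent u) :
    |halfLap H y| ≤ B := by
  obtain ⟨A, hA0, hA⟩ := exists_halfLap_tent_bound
  have hT := integral_tent_pos
  have hHy : AEStronglyMeasurable (fun w => H (y - w)) :=
    hH.comp_quasiMeasurePreserving
      (quasiMeasurePreserving_sub_left_of_right_invariant volume y)
  have hlim : Filter.Tendsto
      (fun k : ℕ => ∫ w, (H y - H (y - w)) * mollKernel (k + 1) w) Filter.atTop
      (nhds (∫ w, (H y - H (y - w)) * (-((∫ s, tent s) / |w| ^ ((3 : ℝ) / 2))))) := by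
    refine tendsto_integral_of_dominated_convergence
      (fun w => A * ‖(H y - H (y - w)) / |w| ^ ((3 : ℝ) / 2)‖) (fun k => ?_)
      (hInt.norm.const_mul A) (fun k => ?_) ?_
    · exact (aestronglyMeasurable_const.sub hHy).mul
        (integrable_mollKernel (by positivity)).aestronglyMeasurable
    · filter_upwards [Measure.ae_ne volume 0] with w hw
      have hk0 : (0 : ℝ) < (k : ℝ) + 1 := by positivity
      have hw' : 0 < |w| := abs_pos.mpr hw
      have hJ : |mollKernel (k + 1) w| ≤ A / |w| ^ ((3 : ℝ) / 2) := by
        have h1 := hA (((k : ℝ) + 1) * w) (mul_ne_zero hk0.ne' hw)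
        rw [abs_mul, abs_of_pos hk0, Real.mul_rpow hk0.le hw'.le] at h1
        rw [mollKernel, abs_mul, abs_of_pos (by positivity)]
        calc _ ≤ ((k : ℝ) + 1) ^ ((3 : ℝ) / 2) *
              (A / (((k : ℝ) + 1) ^ ((3 : ℝ) / 2) * |w| ^ ((3 : ℝ) / 2))) := by gcongr
          _ = _ := by field_simp
      rw [norm_mul, norm_div, Real.norm_eq_abs (mollKernel _ _),
        Real.norm_of_nonneg (by positivity : (0 : ℝ) ≤ |w| ^ ((3 : ℝ) / 2))]
      calc _ ≤ ‖H y - H (y - w)‖ * (A / |w| ^ ((3 : ℝ) / 2)) := by gcongr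
        _ = _ := by ring
    · filter_upwards [Measure.ae_ne volume 0] with w hw
      exact (tendsto_mollKernel hw).const_mul _
  have hval : ∫ w, (H y - H (y - w)) * (-((∫ s, tent s) / |w| ^ ((3 : ℝ) / 2)))
      = -(∫ s, tent s) * halfLap H y := by
    rw [halfLap, ← integral_const_mul]
    congr 1; ext w; ring
  rw [hval] at hlim
  have hbd : ∀ k : ℕ, |∫ w, (H y - H (y - w)) * mollKernel (k + 1) w| ≤ B * ∫ u, tent u := by
    intro k
    have hk : (1 : ℝ) ≤ (k : ℝ) + 1 := by linarith [(Nat.cast_nonneg k : (0 : ℝ) ≤ k)]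
    have hJ := integrable_mollKernel (one_pos.trans_le hk)
    have hi : Integrable (fun w => H (y - w) * mollKernel (k + 1) w) :=
      hJ.bdd_mul (c := M) hHy (Filter.Eventually.of_forall fun w => hM _)
    simp_rw [sub_mul]
    rw [integral_sub (hJ.const_mul _) hi, integral_const_mul, integral_mollKernel hk, mul_zero,
      zero_sub, abs_neg]
    exact hB _ hk
  have := le_of_tendsto hlim.abs (Filter.Eventually.of_forall hbd)
  rw [abs_mul, abs_neg, abs_of_pos hT, mul_comm B] at this
  exact le_of_mul_le_mul_left this hT

/-- The Riesz-type potential in the second variable produced by commuting the weight `y₁ + y₂` with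
the singular integral. -/
noncomputable def potential (φ : ℝ → ℝ → ℝ) (a b : ℝ) : ℝ :=
  ∫ z : ℝ, z / |z| ^ ((3 : ℝ) / 2) * φ a (b - z)

theorem abs_div_abs_rpow (z : ℝ) :
    |z / |z| ^ ((3 : ℝ) / 2)| = |z| / |z| ^ ((3 : ℝ) / 2) := by
  rw [abs_div, abs_of_nonneg (by positivity : (0 : ℝ) ≤ |z| ^ ((3 : ℝ) / 2))]

theorem abs_le_mul_exp_snd {φ : ℝ → ℝ → ℝ} {C₀ lam : ℝ} (hC₀ : 0 < C₀) (hlam : 0 < lam)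
    (hdecay : ∀ y₁ y₂ : ℝ, |φ y₁ y₂| ≤ C₀ * Real.exp (-lam * (|y₁| + |y₂|))) (a b : ℝ) :
    |φ a b| ≤ C₀ * Real.exp (-lam * |b|) := by
  refine (hdecay a b).trans ?_
  have : -lam * (|a| + |b|) ≤ -lam * |b| := by nlinarith [abs_nonneg a]
  gcongr

theorem norm_kernel_mul_le {z x c e : ℝ} (h : |x| ≤ c * e) :
    ‖z / |z| ^ ((3 : ℝ) / 2) * x‖ ≤ c * (|z| / |z| ^ ((3 : ℝ) / 2) * e) := by
  rw [norm_mul, Real.norm_eq_abs, Real.norm_eq_abs, abs_div_abs_rpow]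
  calc _ ≤ |z| / |z| ^ ((3 : ℝ) / 2) * (c * e) := by gcongr
    _ = _ := by ring

theorem integrable_potential {φ : ℝ → ℝ → ℝ} {C₀ lam : ℝ} (hC₀ : 0 < C₀) (hlam : 0 < lam)
    (hφ : Continuous (fun p : ℝ × ℝ => φ p.1 p.2))
    (hdecay : ∀ y₁ y₂ : ℝ, |φ y₁ y₂| ≤ C₀ * Real.exp (-lam * (|y₁| + |y₂|))) (a b : ℝ) :
    Integrable (fun z : ℝ => z / |z| ^ ((3 : ℝ) / 2) * φ a (b - z)) := by
  obtain ⟨W, -, hW⟩ := exists_weighted_exp_integral_bound hlam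
  have hm : Continuous (fun z : ℝ => φ a (b - z)) :=
    hφ.comp (g := fun p : ℝ × ℝ => φ p.1 p.2) (f := fun z : ℝ => (a, b - z)) (by fun_prop)
  exact ((hW b).1.const_mul C₀).mono' (Measurable.aestronglyMeasurable (by fun_prop))
    (Filter.Eventually.of_forall fun z =>
      norm_kernel_mul_le (abs_le_mul_exp_snd hC₀ hlam hdecay a (b - z)))

theorem one_add_sq_rpow_le_of_near {a y : ℝ} (h : |a - y| ≤ 2) :
    (1 + a ^ 2) ^ (-(3 : ℝ) / 4) ≤ 9 * (1 + y ^ 2) ^ (-(3 : ℝ) / 4) := by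
  have h1 : (1 + y ^ 2) / 9 ≤ 1 + a ^ 2 := by
    obtain ⟨h2, h3⟩ := abs_le.mp h
    nlinarith [sq_nonneg (a + (a - y))]
  have h9 : (9 : ℝ) ^ ((3 : ℝ) / 4) ≤ 9 := by
    calc (9 : ℝ) ^ ((3 : ℝ) / 4) ≤ (9 : ℝ) ^ (1 : ℝ) :=
          Real.rpow_le_rpow_of_exponent_le (by norm_num) (by norm_num)
      _ = 9 := Real.rpow_one 9
  calc (1 + a ^ 2) ^ (-(3 : ℝ) / 4) ≤ ((1 + y ^ 2) / 9) ^ (-(3 : ℝ) / 4) :=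
        Real.rpow_le_rpow_of_nonpos (by positivity) h1 (by norm_num)
    _ = 9 ^ ((3 : ℝ) / 4) * (1 + y ^ 2) ^ (-(3 : ℝ) / 4) := by
        rw [Real.div_rpow (by positivity) (by norm_num), div_eq_mul_inv, mul_comm,
          ← Real.rpow_neg (by norm_num)]
        norm_num
    _ ≤ _ := by gcongr

theorem rpow_neg_three_quarters_mul (y : ℝ) :
    (1 + y ^ 2) ^ (-(3 : ℝ) / 4) * (1 + y ^ 2) ^ (-(1 : ℝ) / 4) = (1 + y ^ 2)⁻¹ := by
  rw [← Real.rpow_add (by positivity), ← Real.rpow_neg_one]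
  norm_num

/-- The singular integral in the first variable of the potential in the second variable decays on
the diagonal. -/
theorem abs_halfLap_potential_le {φ : ℝ → ℝ → ℝ} {C₀ C₁ lam W y : ℝ} (hC₀ : 0 < C₀)
    (hC₁ : 0 < C₁) (hlam : 0 < lam)
    (hW : Integrable (fun z : ℝ => |z| / |z| ^ ((3 : ℝ) / 2) * Real.exp (-lam * |y - z|)) ∧
      ∫ z : ℝ, |z| / |z| ^ ((3 : ℝ) / 2) * Real.exp (-lam * |y - z|)
        ≤ W * (1 + y ^ 2) ^ (-(1 : ℝ) / 4))
    (hφ : Continuous (fun p : ℝ × ℝ => φ p.1 p.2))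
    (hdecay : ∀ y₁ y₂ : ℝ, |φ y₁ y₂| ≤ C₀ * Real.exp (-lam * (|y₁| + |y₂|)))
    (hInt : ∀ y₁ y₂ : ℝ,
      Integrable (fun z : ℝ => (φ y₁ y₂ - φ (y₁ - z) y₂) / |z| ^ ((3 : ℝ) / 2)))
    (hD : ∀ y₁ y₂ : ℝ, |halfLap (fun a => φ a y₂) y₁|
      ≤ C₁ * (1 + y₁ ^ 2) ^ (-(3 : ℝ) / 4) * Real.exp (-lam * |y₂|))
    (hpot : Integrable (fun w : ℝ =>
      (potential φ y y - potential φ (y - w) y) / |w| ^ ((3 : ℝ) / 2))) :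
    |halfLap (fun a => potential φ a y) y| ≤ 9 * C₁ * W * (1 + y ^ 2)⁻¹ := by
  have hsnd := abs_le_mul_exp_snd hC₀ hlam hdecay
  have hmeas : Measurable (fun p : ℝ × ℝ => p.2 / |p.2| ^ ((3 : ℝ) / 2) * φ p.1 (y - p.2)) := by
    have : Continuous (fun p : ℝ × ℝ => φ p.1 (y - p.2)) :=
      hφ.comp (g := fun p : ℝ × ℝ => φ p.1 p.2) (f := fun p : ℝ × ℝ => (p.1, y - p.2))
        (by fun_prop)
    fun_prop
  refine abs_halfLap_le_of_mollKernel
    (M := ∫ z : ℝ, C₀ * (|z| / |z| ^ ((3 : ℝ) / 2) * Real.exp (-lam * |y - z|)))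
    hmeas.stronglyMeasurable.integral_prod_right'.aestronglyMeasurable (fun a => ?_) hpot
    fun N hN => ?_
  · rw [← Real.norm_eq_abs, potential]
    exact norm_integral_le_of_norm_le (hW.1.const_mul C₀)
      (Filter.Eventually.of_forall fun z => norm_kernel_mul_le (hsnd a (y - z)))
  have hJ := integrable_mollKernel (one_pos.trans_le hN)
  have hprod : Integrable (fun p : ℝ × ℝ =>
      p.2 / |p.2| ^ ((3 : ℝ) / 2) * φ (y - p.1) (y - p.2) * mollKernel N p.1)
      (volume.prod volume) := by
    have hcont : Continuous (fun p : ℝ × ℝ => φ (y - p.1) (y - p.2)) :=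
      hφ.comp (g := fun p : ℝ × ℝ => φ p.1 p.2) (f := fun p : ℝ × ℝ => (y - p.1, y - p.2))
        (by fun_prop)
    refine (hJ.norm.mul_prod (hW.1.const_mul C₀)).mono' ?_
      (Filter.Eventually.of_forall fun p => ?_)
    · exact AEStronglyMeasurable.mul (Measurable.aestronglyMeasurable (by fun_prop))
        hJ.aestronglyMeasurable.comp_fst
    · rw [norm_mul, mul_comm]
      exact mul_le_mul_of_nonneg_left (norm_kernel_mul_le (hsnd _ _)) (norm_nonneg _)
  have hswap : ∫ w, potential φ (y - w) y * mollKernel N w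
      = ∫ z : ℝ, z / |z| ^ ((3 : ℝ) / 2) * ∫ w, φ (y - w) (y - z) * mollKernel N w := by
    calc _ = ∫ w, ∫ z : ℝ, z / |z| ^ ((3 : ℝ) / 2) * φ (y - w) (y - z) * mollKernel N w := by
          simp_rw [integral_mul_const]; rfl
      _ = ∫ z : ℝ, ∫ w, z / |z| ^ ((3 : ℝ) / 2) * φ (y - w) (y - z) * mollKernel N w :=
          integral_integral_swap hprod
      _ = _ := by simp_rw [mul_assoc, integral_const_mul]
  have hT := integral_tent_pos
  set c : ℝ := C₁ * (9 * (1 + y ^ 2) ^ (-(3 : ℝ) / 4)) * ∫ u, tent u with hc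
  have hinner : ∀ z : ℝ, |∫ w, φ (y - w) (y - z) * mollKernel N w|
      ≤ c * Real.exp (-lam * |y - z|) := by
    intro z
    have hb := abs_integral_mul_mollKernel_le (f := fun a => φ a (y - z)) (y := y) (M := C₀)
      (B := C₁ * (9 * (1 + y ^ 2) ^ (-(3 : ℝ) / 4)) * Real.exp (-lam * |y - z|)) hN
      (hφ.comp (g := fun p : ℝ × ℝ => φ p.1 p.2) (f := fun a : ℝ => (a, y - z)) (by fun_prop))
      (fun a => (hsnd a (y - z)).trans (mul_le_of_le_one_right hC₀.le
        (Real.exp_le_one_iff.mpr (by nlinarith [abs_nonneg (y - z)]))))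
      (fun a => hInt a (y - z))
      (fun a ha => (hD a (y - z)).trans (by
        have := one_add_sq_rpow_le_of_near ha
        gcongr))
    refine hb.trans (le_of_eq ?_)
    rw [hc]; ring
  rw [hswap, ← Real.norm_eq_abs]
  calc _ ≤ ∫ z : ℝ, c * (|z| / |z| ^ ((3 : ℝ) / 2) * Real.exp (-lam * |y - z|)) :=
        norm_integral_le_of_norm_le (hW.1.const_mul c)
          (Filter.Eventually.of_forall fun z => norm_kernel_mul_le (hinner z))
    _ = c * ∫ z : ℝ, |z| / |z| ^ ((3 : ℝ) / 2) * Real.exp (-lam * |y - z|) :=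
        integral_const_mul _ _
    _ ≤ c * (W * (1 + y ^ 2) ^ (-(1 : ℝ) / 4)) := by
        gcongr
        exact hW.2
    _ = _ := by rw [← rpow_neg_three_quarters_mul, hc]; ring

theorem stronglyMeasurable_sqrtD2_left {φ : ℝ → ℝ → ℝ} (hφ : Continuous (fun p : ℝ × ℝ => φ p.1 p.2))
    (Cf b : ℝ) : StronglyMeasurable (fun a => sqrtD2 Cf φ a b) := by
  have h1 : Continuous (fun p : ℝ × ℝ => φ p.1 b) :=
    hφ.comp (g := fun p : ℝ × ℝ => φ p.1 p.2) (f := fun p : ℝ × ℝ => (p.1, b)) (by fun_prop)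
  have h2 : Continuous (fun p : ℝ × ℝ => φ p.1 (b - p.2)) :=
    hφ.comp (g := fun p : ℝ × ℝ => φ p.1 p.2) (f := fun p : ℝ × ℝ => (p.1, b - p.2))
      (by fun_prop)
  have hm : Measurable (fun p : ℝ × ℝ =>
      (φ p.1 b - φ p.1 (b - p.2)) / |p.2| ^ ((3 : ℝ) / 2)) := by fun_prop
  exact hm.stronglyMeasurable.integral_prod_right'.const_mul Cf

/-- Commuting the weight `y₁ + y₂` with the singular integral in the second variable. -/
theorem sqrtD2_add_mul {φ : ℝ → ℝ → ℝ} (Cf a b : ℝ)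
    (h : Integrable (fun z : ℝ => (φ a b - φ a (b - z)) / |z| ^ ((3 : ℝ) / 2)))
    (hpot : Integrable (fun z : ℝ => z / |z| ^ ((3 : ℝ) / 2) * φ a (b - z))) :
    sqrtD2 Cf (fun a b => (a + b) * φ a b) a b
      = (a + b) * sqrtD2 Cf φ a b + Cf * potential φ a b := by
  have he : ∀ z : ℝ, ((a + b) * φ a b - (a + (b - z)) * φ a (b - z)) / |z| ^ ((3 : ℝ) / 2)
      = (a + b) * ((φ a b - φ a (b - z)) / |z| ^ ((3 : ℝ) / 2))
        + z / |z| ^ ((3 : ℝ) / 2) * φ a (b - z) := fun z => by ring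
  simp only [sqrtD2, potential]
  simp_rw [he]
  rw [integral_add (h.const_mul _) hpot, integral_const_mul]
  ring

/-- Decay on the diagonal of the cross fractional derivative of `(y₁+y₂)·φ`,
given exponential decay of `φ` and decay of its fractional derivatives. -/
theorem stmt_11 (Cf : ℝ) (hCf : 0 < Cf)
    (hCfdef : 1 / Cf = ∫ z : ℝ, (1 - Real.cos (2 * Real.pi * z)) / |z| ^ ((3:ℝ)/2))
    (C₀ lam : ℝ) (hC₀ : 0 < C₀) (hlam : 0 < lam) :
    ∃ C > (0:ℝ), ∀ φ : ℝ → ℝ → ℝ,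
      Continuous (fun p : ℝ × ℝ => φ p.1 p.2) →
      (∀ y₁ y₂ : ℝ, |φ y₁ y₂| ≤ C₀ * Real.exp (-lam * (|y₁| + |y₂|))) →
      (∀ y₁ y₂ : ℝ,
        Integrable (fun z : ℝ => (φ y₁ y₂ - φ (y₁ - z) y₂) / |z| ^ ((3:ℝ)/2))) →
      (∀ y₁ y₂ : ℝ,
        Integrable (fun z : ℝ => (φ y₁ y₂ - φ y₁ (y₂ - z)) / |z| ^ ((3:ℝ)/2))) →
      (∀ y₁ y₂ : ℝ,
        Integrable (fun z : ℝ =>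
          (sqrtD2 Cf φ y₁ y₂ - sqrtD2 Cf φ (y₁ - z) y₂) / |z| ^ ((3:ℝ)/2))) →
      (∀ y₁ y₂ : ℝ,
        Integrable (fun z : ℝ =>
          ((y₁ + y₂) * φ y₁ y₂ - (y₁ + (y₂ - z)) * φ y₁ (y₂ - z)) / |z| ^ ((3:ℝ)/2))) →
      (∀ y₁ y₂ : ℝ,
        Integrable (fun z : ℝ =>
          (sqrtD2 Cf (fun a b => (a + b) * φ a b) y₁ y₂ -
            sqrtD2 Cf (fun a b => (a + b) * φ a b) (y₁ - z) y₂) / |z| ^ ((3:ℝ)/2))) →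
      (∀ y₁ y₂ : ℝ,
        |sqrtD1 Cf φ y₁ y₂| ≤ C₀ * (1 + y₁ ^ 2) ^ (-(3:ℝ)/4) * Real.exp (-lam * |y₂|)) →
      (∀ y₁ y₂ : ℝ,
        |sqrtD2 Cf φ y₁ y₂| ≤ C₀ * (1 + y₂ ^ 2) ^ (-(3:ℝ)/4) * Real.exp (-lam * |y₁|)) →
      (∀ y : ℝ, |sqrtDD Cf φ y y| ≤ C₀ * (1 + y ^ 2) ^ (-(3:ℝ)/2)) →
      ∀ y : ℝ, |sqrtDD Cf (fun a b => (a + b) * φ a b) y y| ≤ C * (1 + y ^ 2)⁻¹ := by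
  obtain ⟨W, hW0, hW⟩ := exists_weighted_exp_integral_bound hlam
  refine ⟨2 * C₀ + Cf * (C₀ * W) + Cf * (Cf * (9 * (C₀ / Cf) * W)), by positivity, ?_⟩
  intro φ hφ hdecay hInt₁ hInt₂ hInt₁₂ _ hIntψ hD₁ hD₂ hDD y
  have hkernel : ∀ a b, Integrable (fun z : ℝ => z / |z| ^ ((3 : ℝ) / 2) * φ a (b - z)) :=
    integrable_potential hC₀ hlam hφ hdecay
  have hcomm : ∀ a b, sqrtD2 Cf (fun a b => (a + b) * φ a b) a b
      = (a + b) * sqrtD2 Cf φ a b + Cf * potential φ a b :=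
    fun a b => sqrtD2_add_mul Cf a b (hInt₂ a b) (hkernel a b)
  have hmid_bound : ∀ w : ℝ, ‖w / |w| ^ ((3 : ℝ) / 2) * sqrtD2 Cf φ (y - w) y‖
      ≤ C₀ * (1 + y ^ 2) ^ (-(3 : ℝ) / 4) *
        (|w| / |w| ^ ((3 : ℝ) / 2) * Real.exp (-lam * |y - w|)) :=
    fun w => norm_kernel_mul_le (hD₂ (y - w) y)
  have hmid : Integrable (fun w : ℝ => w / |w| ^ ((3 : ℝ) / 2) * sqrtD2 Cf φ (y - w) y) := by
    refine ((hW y).1.const_mul _).mono' ?_ (Filter.Eventually.of_forall hmid_bound)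
    have hm := ((stronglyMeasurable_sqrtD2_left hφ Cf y).measurable.comp (measurable_const.sub
      measurable_id : Measurable fun w : ℝ => y - w))
    exact AEStronglyMeasurable.mul (Measurable.aestronglyMeasurable (by fun_prop))
      hm.aestronglyMeasurable
  have hmid_le : |∫ w : ℝ, w / |w| ^ ((3 : ℝ) / 2) * sqrtD2 Cf φ (y - w) y|
      ≤ C₀ * W * (1 + y ^ 2)⁻¹ := by
    rw [← Real.norm_eq_abs]
    refine (norm_integral_le_of_norm_le ((hW y).1.const_mul _)
      (Filter.Eventually.of_forall hmid_bound)).trans ?_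
    rw [integral_const_mul, ← rpow_neg_three_quarters_mul]
    calc _ ≤ C₀ * (1 + y ^ 2) ^ (-(3 : ℝ) / 4) * (W * (1 + y ^ 2) ^ (-(1 : ℝ) / 4)) := by
          gcongr
          exact (hW y).2
      _ = _ := by ring
  have hsplit : ∀ w : ℝ, (sqrtD2 Cf (fun a b => (a + b) * φ a b) y y -
      sqrtD2 Cf (fun a b => (a + b) * φ a b) (y - w) y) / |w| ^ ((3 : ℝ) / 2)
      = 2 * y * ((sqrtD2 Cf φ y y - sqrtD2 Cf φ (y - w) y) / |w| ^ ((3 : ℝ) / 2))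
        + w / |w| ^ ((3 : ℝ) / 2) * sqrtD2 Cf φ (y - w) y
        + Cf * ((potential φ y y - potential φ (y - w) y) / |w| ^ ((3 : ℝ) / 2)) := fun w => by
    rw [hcomm, hcomm]; ring
  have hDDint := (hInt₁₂ y y).const_mul (2 * y)
  have hpot : Integrable (fun w : ℝ =>
      (potential φ y y - potential φ (y - w) y) / |w| ^ ((3 : ℝ) / 2)) := by
    refine ((((hIntψ y y).sub hDDint).sub hmid).const_mul Cf⁻¹).congr
      (Filter.Eventually.of_forall fun w => ?_)
    simp only [Pi.sub_apply]
    rw [hsplit]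
    field_simp
    ring
  have hpot_le : |halfLap (fun a => potential φ a y) y| ≤ 9 * (C₀ / Cf) * W * (1 + y ^ 2)⁻¹ := by
    refine abs_halfLap_potential_le hC₀ (by positivity) hlam (hW y) hφ hdecay hInt₁
      (fun y₁ y₂ => ?_) hpot
    have h1 : |sqrtD1 Cf φ y₁ y₂| = Cf * |halfLap (fun a => φ a y₂) y₁| := by
      rw [sqrtD1, abs_mul, abs_of_pos hCf, halfLap]
    have h2 := hD₁ y₁ y₂
    rw [h1] at h2
    calc |halfLap (fun a => φ a y₂) y₁|
        ≤ (C₀ * (1 + y₁ ^ 2) ^ (-(3 : ℝ) / 4) * Real.exp (-lam * |y₂|)) / Cf := by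
          rw [le_div_iff₀ hCf]; linarith
      _ = _ := by ring
  have hdiag : |2 * y * sqrtDD Cf φ y y| ≤ 2 * C₀ * (1 + y ^ 2)⁻¹ := by
    have hsq : |y| ≤ (1 + y ^ 2) ^ ((1 : ℝ) / 2) := by
      rw [← Real.sqrt_eq_rpow]
      exact Real.abs_le_sqrt (by linarith)
    rw [abs_mul, abs_mul, abs_two]
    calc 2 * |y| * |sqrtDD Cf φ y y|
        ≤ 2 * (1 + y ^ 2) ^ ((1 : ℝ) / 2) * (C₀ * (1 + y ^ 2) ^ (-(3 : ℝ) / 2)) := by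
          gcongr
          exact hDD y
      _ = 2 * C₀ * ((1 + y ^ 2) ^ ((1 : ℝ) / 2) * (1 + y ^ 2) ^ (-(3 : ℝ) / 2)) := by ring
      _ = _ := by
          rw [← Real.rpow_add (by positivity), ← Real.rpow_neg_one (1 + y ^ 2)]
          norm_num
  have hfinal : sqrtDD Cf (fun a b => (a + b) * φ a b) y y
      = 2 * y * sqrtDD Cf φ y y
        + Cf * (∫ w : ℝ, w / |w| ^ ((3 : ℝ) / 2) * sqrtD2 Cf φ (y - w) y)
        + Cf * (Cf * halfLap (fun a => potential φ a y) y) := by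
    simp only [sqrtDD, sqrtD1, halfLap]
    simp_rw [hsplit]
    have hsum : Integrable (fun w : ℝ =>
        2 * y * ((sqrtD2 Cf φ y y - sqrtD2 Cf φ (y - w) y) / |w| ^ ((3 : ℝ) / 2))
          + w / |w| ^ ((3 : ℝ) / 2) * sqrtD2 Cf φ (y - w) y) := hDDint.add hmid
    rw [integral_add hsum (hpot.const_mul Cf), integral_add hDDint hmid,
      integral_const_mul, integral_const_mul]
    ring
  rw [hfinal]
  refine (abs_add_three _ _ _).trans ?_
  rw [abs_mul Cf, abs_mul Cf (Cf * _), abs_mul Cf, abs_of_pos hCf]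
  calc _ ≤ 2 * C₀ * (1 + y ^ 2)⁻¹ + Cf * (C₀ * W * (1 + y ^ 2)⁻¹)
        + Cf * (Cf * (9 * (C₀ / Cf) * W * (1 + y ^ 2)⁻¹)) := by gcongr
    _ = _ := by ring
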